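/- arXiv:1605.06733 — 2 statements merged into one kernel-verified Lean document; each statement's English description precedes it below -/
import Mathlib

section
/- Let N = p + q with integers p > q ≥ 0, c = 4/(p−q), and let ε = +1 with κ = N/2 − 1 (orthogonal case) or ε = −1 with κ = N/2 + 1 (symplectic case, N even). Define the rational functions T(u) = (N − 4u)/(1 − cu) (the trace of the second-kind K-matrix K(u) = (I − cuG)(1−cu)^{−1}) and p(u) = 1 − ε/(2u−κ) + T(u)/(2u−2κ). Then p(u)·p(κ−u) = 1 − 1/(2u−κ)² in ℂ(u). Moreover, the rational function −1 + 1/(2u−κ) (the function p(u) for the constant K-matrices of types CI and DIII, whose trace is 0) satisfies the same identity. -/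
set_option maxHeartbeats 1000000
set_option synthInstance.maxHeartbeats 400000

noncomputable section

/-- The function `p(u) = 1 - ε/(2u-κ) + T(u)/(2u-2κ)` of Lemma 2.2, where
`T(u) = (N - 4u)/(1 - cu)` is the trace of the K-matrix of the second kind,
evaluated at `w ∈ ℂ(u)`. -/
def pSecond (c κ Nc ε : ℂ) (w : RatFunc ℂ) : RatFunc ℂ :=
  1 - RatFunc.C ε / (2 * w - RatFunc.C κ)
    + ((RatFunc.C Nc - 4 * w) / (1 - RatFunc.C c * w)) / (2 * w - 2 * RatFunc.C κ)

/-- The function `p(u) = -1 + 1/(2u-κ)` for the constant K-matrices of types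
CI and DIII (whose trace is `0`). -/
def pCIDIII (κ : ℂ) (w : RatFunc ℂ) : RatFunc ℂ :=
  -1 + 1 / (2 * w - RatFunc.C κ)

/-!
Put `v = 2u - κ`, so that `u ↦ κ - u` becomes `v ↦ -v`, and `d = p - q`, `c = 4/d`. Since
`N = 2κ + 2ε`, we have `N - 4u = -2(v - ε)`, and `p(u)` factors completely
(`pSecond_factor`):
`p(u) = -(v - ε)/v · (v + κ)(2v - 2κ + d) / ((v - κ)(d - 2v - 2κ))`.
Under `v ↦ -v` the second fraction is inverted, so the product is
`(v - ε)(v + ε)/v² = 1 - 1/v²`, because `ε² = 1`. No denominator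
vanishes, because each is a polynomial of degree one in `u` (`linear_ne_zero`). For types CI and
DIII the product is `(-1 + 1/v)(-1 - 1/v)`.
-/

lemma linear_ne_zero (a b : ℂ) (ha : a ≠ 0) :
    RatFunc.C a * RatFunc.X + RatFunc.C b ≠ (0 : RatFunc ℂ) := by
  rw [← RatFunc.algebraMap_C, ← RatFunc.algebraMap_C, ← RatFunc.algebraMap_X, ← map_mul,
    ← map_add]
  refine RatFunc.algebraMap_ne_zero fun h => ha ?_
  simpa using congrArg (fun f => Polynomial.coeff f 1) h

/-- The complete factorization of `p` into linear factors, over any field: here `N = 2k + 2e` and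
`c = 4 / d`, and the factor `2 * w` is `v + k` for `v = 2 * w - k`. -/
lemma pSecond_factor {F : Type*} [Field F] (w d k e : F) (hd : d ≠ 0)
    (h1 : 2 * w - k ≠ 0) (h2 : 2 * w - 2 * k ≠ 0) (h3 : d - 4 * w ≠ 0) :
    1 - e / (2 * w - k) + ((2 * k + 2 * e - 4 * w) / (1 - 4 / d * w)) / (2 * w - 2 * k)
      = -((2 * w - k - e) * (2 * w) * (4 * w - 4 * k + d))
        / ((2 * w - k) * (2 * w - 2 * k) * (d - 4 * w)) := by
  have h4 : 1 - 4 / d * w = (d - 4 * w) / d := by field_simp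
  have h5 : 2 * w - 2 * k = 2 * (w - k) := by ring
  rw [h5] at h2
  have h6 : (2 : F) ≠ 0 := left_ne_zero_of_mul h2
  have h7 : w - k ≠ 0 := right_ne_zero_of_mul h2
  rw [h4, h5]
  clear h4 h5
  generalize hB : d - 4 * w = B at *
  field_simp
  rw [← hB]
  ring

/-- identity (2.10) of Lemma 2.2: `p(u)·p(κ-u) = 1 - 1/(2u-κ)²`,
both for the second-kind K-matrices of types BDI/CII and for the constant
K-matrices of types CI/DIII.  Here `sp = false` is the orthogonal case
(`ε = 1`, `κ = N/2 - 1`) and `sp = true` the symplectic case (`ε = -1`,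
`κ = N/2 + 1`, `N` even). -/
theorem stmt1 (p q : ℕ) (hpq : q < p) (sp : Bool)
    (hEv : sp = true → Even (p + q))
    (c ε κ : ℂ) (hc : c = 4 / ((p : ℂ) - (q : ℂ)))
    (hε : ε = if sp then -1 else 1)
    (hκ : κ = (((p : ℂ) + (q : ℂ))) / 2 - ε) :
    pSecond c κ ((p : ℂ) + (q : ℂ)) ε RatFunc.X
        * pSecond c κ ((p : ℂ) + (q : ℂ)) ε (RatFunc.C κ - RatFunc.X)
      = 1 - ((2 * RatFunc.X - RatFunc.C κ) ^ 2)⁻¹ ∧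
    pCIDIII κ RatFunc.X * pCIDIII κ (RatFunc.C κ - RatFunc.X)
      = 1 - ((2 * RatFunc.X - RatFunc.C κ) ^ 2)⁻¹ := by
  have hd : (p : ℂ) - q ≠ 0 := by
    rw [sub_ne_zero]
    exact_mod_cast hpq.ne'
  have hε2 : ε ^ 2 = 1 := by
    subst hε
    cases sp <;> simp
  have hN : (p : ℂ) + q = 2 * κ + 2 * ε := by
    rw [hκ]
    ring
  rw [hN]
  generalize (p : ℂ) - q = d at hc hd
  subst hc
  have hDn : (RatFunc.C d : RatFunc ℂ) ≠ 0 := by simpa using hd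
  have hE : (RatFunc.C ε : RatFunc ℂ) ^ 2 = 1 := by rw [← map_pow, hε2, map_one]
  have C2 : (RatFunc.C 2 : RatFunc ℂ) = 2 := map_ofNat _ 2
  have C4 : (RatFunc.C 4 : RatFunc ℂ) = 4 := map_ofNat _ 4
  have n0 : (RatFunc.X : RatFunc ℂ) ≠ 0 := RatFunc.X_ne_zero
  have n1 := linear_ne_zero 2 (-κ) (by norm_num)
  have n2 := linear_ne_zero 1 (-κ) (by norm_num)
  have n3 := linear_ne_zero (-4) d (by norm_num)
  have n4 := linear_ne_zero 4 (d - 4 * κ) (by norm_num)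
  simp only [map_neg, map_sub, map_mul, map_one, C2, C4] at n1 n2 n3 n4
  unfold pSecond pCIDIII
  simp only [map_add, map_mul, map_div₀, C2, C4]
  generalize RatFunc.C κ = k at *
  generalize RatFunc.C ε = e at *
  generalize RatFunc.C d = D at *
  generalize (RatFunc.X : RatFunc ℂ) = x at *
  have t2 : (2 : RatFunc ℂ) ≠ 0 := two_ne_zero
  have m1 : 2 * x - k ≠ 0 := by convert n1 using 1; ring
  have m2 : x - k ≠ 0 := by convert n2 using 1; ring
  have m3 : D - 4 * x ≠ 0 := by convert n3 using 1; ring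
  have m4 : 4 * x - 4 * k + D ≠ 0 := by convert n4 using 1; ring
  have r1 : 2 * (k - x) - k = -(2 * x - k) := by ring
  have r2 : 2 * (k - x) - 2 * k = -(2 * x) := by ring
  have r3 : D - 4 * (k - x) = 4 * x - 4 * k + D := by ring
  have r4 : 4 * (k - x) - 4 * k + D = D - 4 * x := by ring
  have r5 : 2 * x - 2 * k = 2 * (x - k) := by ring
  constructor
  · rw [pSecond_factor x D k e hDn m1 (by rw [r5]; exact mul_ne_zero t2 m2) m3,
      pSecond_factor (k - x) D k e hDn (by rw [r1]; exact neg_ne_zero.mpr m1)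
        (by rw [r2]; exact neg_ne_zero.mpr (mul_ne_zero t2 n0)) (by rw [r3]; exact m4),
      r1, r2, r3, r4, r5]
    -- Abstracting the linear factors lets `field_simp` cancel them without expanding.
    have r6 : 2 * (k - x) = -(2 * (x - k)) := by ring
    rw [r6]
    generalize 2 * x - k = v at *
    generalize x - k = y at *
    generalize 4 * x - 4 * k + D = A at *
    generalize D - 4 * x = B at *
    field_simp
    linear_combination -hE
  · rw [r1]
    generalize 2 * x - k = v at *
    field_simp
    ring
end
end

section
/- Let a ∈ ℂ and let P ∈ ℂ[u] be a monic polynomial satisfying P(u) = P(a−u) (so that deg P is even). Then there exists a monic polynomial Q ∈ ℂ[u] such that P(u) = (−1)^{deg Q}·Q(u)·Q(a−u). -/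
/-!
The affine involution `u ↦ a - u` permutes the roots of `P`, and the factorization is built by
induction on the degree, removing a root `r` together with its mirror image `a - r`. When
`r ≠ a - r` both are visibly roots. When `r = a - r`, the cofactor of `X - r` is antisymmetric, so
it vanishes at the fixed point `r`, and `r` is at least a double root. In both cases
`P = (X - r) (X - (a - r)) R`, where the quadratic factor is symmetric, hence so is `R`; if `Q`
works for `R`, then `(X - r) Q` works for `P`, since `X - r` composed with `a - X` is
`-(X - (a - r))`.
-/

open Polynomial in
/-- A root `r` of a symmetric polynomial splits off together with its mirror image `a - r`,
also when the two coincide. -/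
lemma exists_eq_mul_of_symm_of_isRoot (a r : ℂ) (P : ℂ[X])
    (hsym : P = P.comp (C a - X)) (hr : P.IsRoot r) :
    ∃ R : ℂ[X], P = (X - C r) * ((X - C (a - r)) * R) := by
  obtain ⟨S, hS⟩ := dvd_iff_isRoot.mpr hr
  have hroot : S.IsRoot (a - r) := by
    by_cases h : a - r = r
    · have hc : (X - C r) * S = (X - C r) * (-S.comp (C a - X)) := by
        have hCa : (C a : ℂ[X]) = C r + C r := by
          rw [← C_add]
          congr 1
          linear_combination h
        rw [← hS]
        conv_lhs => rw [hsym, hS]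
        simp only [mul_comp, sub_comp, X_comp, C_comp]
        rw [hCa]
        ring
      have h2 := congrArg (eval r) (mul_left_cancel₀ (X_sub_C_ne_zero r) hc)
      simp only [eval_neg, eval_comp, eval_sub, eval_C, eval_X, h] at h2
      rw [IsRoot.def, h]
      linear_combination (1 / 2 : ℂ) * h2
    · have h1 : P.eval (a - r) = 0 := by
        rw [hsym, eval_comp]
        simpa using hr
      rw [hS, eval_mul, eval_sub, eval_X, eval_C] at h1
      exact (mul_eq_zero.mp h1).resolve_left (sub_ne_zero.mpr h)
  obtain ⟨R, hR⟩ := dvd_iff_isRoot.mpr hroot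
  exact ⟨R, by rw [← hR, ← hS]⟩

/-- factorization of self-conjugate monic polynomials, used
in the sufficiency parts of Theorems 6.2, 6.4, 6.5: if `P ∈ ℂ[u]` is monic
with `P(u) = P(a-u)`, then there is a monic `Q ∈ ℂ[u]` with
`P(u) = (-1)^(deg Q)·Q(u)·Q(a-u)`. -/
theorem stmt10 (a : ℂ) (P : Polynomial ℂ) (hP : P.Monic)
    (hsym : P = P.comp (Polynomial.C a - Polynomial.X)) :
    ∃ Q : Polynomial ℂ, Q.Monic ∧
      P = Polynomial.C ((-1 : ℂ) ^ Q.natDegree) * Q *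
        Q.comp (Polynomial.C a - Polynomial.X) := by
  open Polynomial in
  induction hn : P.natDegree using Nat.strong_induction_on generalizing P with
  | _ n ih =>
  by_cases h0 : P.natDegree = 0
  · exact ⟨1, monic_one, by simpa using hP.natDegree_eq_zero.mp h0⟩
  obtain ⟨r, hr⟩ := IsAlgClosed.exists_root P
    (fun h => h0 (natDegree_eq_of_degree_eq_some h))
  obtain ⟨R, hR⟩ := exists_eq_mul_of_symm_of_isRoot a r P hsym hr
  have hRm : R.Monic := by
    rw [hR] at hP
    exact (monic_X_sub_C _).of_mul_monic_left ((monic_X_sub_C _).of_mul_monic_left hP)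
  have hdeg : R.natDegree < n := by
    rw [← hn, hR, (monic_X_sub_C r).natDegree_mul ((monic_X_sub_C _).mul hRm),
      (monic_X_sub_C _).natDegree_mul hRm, natDegree_X_sub_C, natDegree_X_sub_C]
    omega
  have hRs : R = R.comp (C a - X) := by
    have h := hsym
    rw [hR] at h
    simp only [mul_comp, sub_comp, X_comp, C_comp] at h
    refine mul_left_cancel₀ (X_sub_C_ne_zero (a - r))
      (mul_left_cancel₀ (X_sub_C_ne_zero r) (h.trans ?_))
    rw [C_sub]
    ring
  obtain ⟨Q, hQ, hQR⟩ := ih _ hdeg R hRm hRs rfl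
  refine ⟨(X - C r) * Q, (monic_X_sub_C r).mul hQ, ?_⟩
  rw [(monic_X_sub_C r).natDegree_mul hQ, natDegree_X_sub_C, hR]
  conv_lhs => rw [hQR]
  simp only [mul_comp, sub_comp, X_comp, C_comp, C_sub, pow_add, pow_one, C_mul, C_neg, C_1]
  ring
end
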